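/- Let d ≥ 1, s ∈ (0,1), p ∈ (1,2], R₀ ∈ (0,1), k ∈ ℕ, and let u : ℝ^d → ℝ be of class C^{1,α} on the ball B_{R₀}(0) for some α ∈ (0,1] with 1 + α > sp/(p−1), with u vanishing to infinite order at 0 (for every n ∈ ℕ, u(x) = O(|x|^n) as |x| → 0). For ε > 0 and x ∈ ℝ^d define W₁(x,ε) := (1/2) ∫_{B_{(k+1)ε}(0)} [J_p(u(x)−u(x+h)) + J_p(u(x)−u(x−h))] |h|^{−d−sp} dh. Then for every n ∈ ℕ there exist C > 0 and ε₁ > 0 such that sup_{x ∈ B_{kε}(0)} |W₁(x,ε)| ≤ C ε^n for all ε ∈ (0,ε₁). -/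

import Mathlib

open MeasureTheory Filter Asymptotics Metric Set NNReal ENNReal

noncomputable section

/-- Euclidean space `ℝ^d`. -/
abbrev Ed (d : ℕ) := EuclideanSpace ℝ (Fin d)

/-- `J_p(t) = |t|^{p-2} t`. -/
def Jp (p t : ℝ) : ℝ := |t| ^ (p - 2) * t

/-- The principal value defining the fractional `p`-Laplacian of `u` at `x` exists and
equals `L`. -/
def fracPLapAt (d : ℕ) (s p : ℝ) (u : Ed d → ℝ) (x : Ed d) (L : ℝ) : Prop :=
  Tendsto (fun δ : ℝ =>
      ∫ y in {y : Ed d | δ < ‖x - y‖}, Jp p (u x - u y) / ‖x - y‖ ^ ((d : ℝ) + s * p))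
    (nhdsWithin 0 (Ioi 0)) (nhds L)

/-- Membership in the tail space `L^{p-1}_{sp}(ℝ^d)`. -/
def memTail (d : ℕ) (s p : ℝ) (u : Ed d → ℝ) : Prop :=
  Measurable u ∧
    Integrable (fun x : Ed d => |u x| ^ (p - 1) / (1 + ‖x‖) ^ ((d : ℝ) + s * p))

/-- The moments `m_{i,k} = ∫ x_i^{2k} |x|^{-4k} |u(x)|^{p-1} |x|^{-d-sp} dx ∈ [0,∞]`. -/
def mik (d : ℕ) (s p : ℝ) (u : Ed d → ℝ) (i : Fin d) (k : ℕ) : ℝ≥0∞ :=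
  ∫⁻ x : Ed d, ENNReal.ofReal
    ((x i ^ (2 * k) / ‖x‖ ^ (4 * k)) * (|u x| ^ (p - 1) / ‖x‖ ^ ((d : ℝ) + s * p)))

/-- The Carleman-type condition: for every `i` the series `∑_{k≥1} m_{i,k}^{-1/(2k)}`
diverges to `+∞` (with conventions `1/0 = ∞`, `1/∞ = 0`). -/
def carleman (d : ℕ) (s p : ℝ) (u : Ed d → ℝ) : Prop :=
  ∀ i : Fin d, ∑' k : ℕ, (mik d s p u i (k + 1) ^ ((1 : ℝ) / (2 * ((k : ℝ) + 1))))⁻¹ = ⊤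

/-!
`J_p` is odd and `(p - 1)`-Hölder, so the sum of the two `J_p` terms is at most `2 |D|^(p-1)`, where
`D` is the second difference of `u` at `x` in the direction `h`. The `C^{1,α}` regularity gives
`|D| ≲ |h|^(1+α)`, and the vanishing of `u` gives `|D| ≲ ε^N` for every `N`. Write `p - 1 = a + b`
with `b > 0` so small that still `(1 + α) a > sp`: the first bound, raised to the power `a`, makes
the kernel integrable at the origin, while the second, raised to the power `b`, gains arbitrarily
many powers of `ε`.
-/

section Jp

variable {p a b : ℝ}

lemma Jp_neg (p t : ℝ) : Jp p (-t) = -Jp p t := by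
  simp [Jp]

lemma Jp_of_nonneg (hp : 1 < p) (ha : 0 ≤ a) : Jp p a = a ^ (p - 1) := by
  rcases ha.eq_or_lt with rfl | ha
  · simp [Jp, Real.zero_rpow (sub_pos.2 hp).ne']
  · rw [Jp, abs_of_pos ha, ← Real.rpow_add_one ha.ne']
    ring_nf

lemma Jp_of_nonpos (hp : 1 < p) (ha : a ≤ 0) : Jp p a = -(-a) ^ (p - 1) := by
  rw [← Jp_of_nonneg hp (neg_nonneg.2 ha), Jp_neg, neg_neg]

lemma abs_Jp_sub_Jp_le_of_nonneg (hp : 1 < p) (hp2 : p ≤ 2) (hb : 0 ≤ b) (hab : b ≤ a) :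
    |Jp p a - Jp p b| ≤ (a - b) ^ (p - 1) := by
  have hmono : b ^ (p - 1) ≤ a ^ (p - 1) := Real.rpow_le_rpow hb hab (by linarith)
  have hsub : (a - b + b) ^ (p - 1) ≤ (a - b) ^ (p - 1) + b ^ (p - 1) :=
    Real.rpow_add_le_add_rpow (sub_nonneg.2 hab) hb (by linarith) (by linarith)
  rw [sub_add_cancel] at hsub
  rw [Jp_of_nonneg hp hb, Jp_of_nonneg hp (hb.trans hab), abs_of_nonneg (sub_nonneg.2 hmono)]
  linarith

lemma abs_Jp_sub_Jp_le (hp : 1 < p) (hp2 : p ≤ 2) (a b : ℝ) :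
    |Jp p a - Jp p b| ≤ 2 * |a - b| ^ (p - 1) := by
  wlog hab : b ≤ a generalizing a b
  · simpa only [abs_sub_comm] using this b a (le_of_not_ge hab)
  have hnonneg : 0 ≤ (a - b) ^ (p - 1) := Real.rpow_nonneg (sub_nonneg.2 hab) _
  rw [abs_of_nonneg (sub_nonneg.2 hab)]
  rcases le_total 0 b with hb | hb
  · linarith [abs_Jp_sub_Jp_le_of_nonneg hp hp2 hb hab]
  rcases le_total a 0 with ha | ha
  · have hneg := abs_Jp_sub_Jp_le_of_nonneg hp hp2 (neg_nonneg.2 ha) (neg_le_neg hab)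
    rw [Jp_neg, Jp_neg, neg_sub_neg, neg_sub_neg] at hneg
    linarith
  · have ha' : a ^ (p - 1) ≤ (a - b) ^ (p - 1) :=
      Real.rpow_le_rpow ha (by linarith) (by linarith)
    have hb' : (-b) ^ (p - 1) ≤ (a - b) ^ (p - 1) :=
      Real.rpow_le_rpow (neg_nonneg.2 hb) (by linarith) (by linarith)
    have hsum : 0 ≤ a ^ (p - 1) + (-b) ^ (p - 1) :=
      add_nonneg (Real.rpow_nonneg ha _) (Real.rpow_nonneg (neg_nonneg.2 hb) _)
    rw [Jp_of_nonneg hp ha, Jp_of_nonpos hp hb, sub_neg_eq_add, abs_of_nonneg hsum]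
    linarith

lemma abs_Jp_add_Jp_le (hp : 1 < p) (hp2 : p ≤ 2) (a b : ℝ) :
    |Jp p a + Jp p b| ≤ 2 * |a + b| ^ (p - 1) := by
  simpa only [Jp_neg, sub_neg_eq_add] using abs_Jp_sub_Jp_le hp hp2 a (-b)

end Jp

lemma rpow_add_le_rpow_mul_rpow {x y z a b : ℝ} (hx : 0 ≤ x) (hxy : x ≤ y) (hxz : x ≤ z)
    (ha : 0 ≤ a) (hb : 0 ≤ b) : x ^ (a + b) ≤ y ^ a * z ^ b := by
  rw [Real.rpow_add_of_nonneg hx ha hb]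
  have hy : 0 ≤ y := hx.trans hxy
  gcongr

section SecondDifference

variable {E F : Type*}

/-- The symmetric second difference of `u` at `x` in the direction `h`, which controls the
symmetrized integrand of the fractional `p`-Laplacian. -/
def secondDiff [AddCommGroup E] [AddCommGroup F] (u : E → F) (x h : E) : F :=
  u (x + h) + u (x - h) - 2 • u x

lemma norm_secondDiff_le [AddCommGroup E] [NormedAddCommGroup F] (u : E → F) (x h : E) :
    ‖secondDiff u x h‖ ≤ ‖u (x + h)‖ + ‖u (x - h)‖ + 2 * ‖u x‖ :=
  (norm_sub_le _ _).trans <| add_le_add (norm_add_le _ _) (norm_nsmul_le ..)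

lemma abs_Jp_add_Jp_le_secondDiff [AddCommGroup E] {p : ℝ} (hp : 1 < p) (hp2 : p ≤ 2)
    (u : E → ℝ) (x h : E) :
    |Jp p (u x - u (x + h)) + Jp p (u x - u (x - h))| ≤ 2 * ‖secondDiff u x h‖ ^ (p - 1) := by
  have hsum : u x - u (x + h) + (u x - u (x - h)) = -secondDiff u x h := by
    rw [secondDiff, two_nsmul]
    ring
  simpa only [hsum, abs_neg, Real.norm_eq_abs] using
    abs_Jp_add_Jp_le hp hp2 (u x - u (x + h)) (u x - u (x - h))

variable [NormedAddCommGroup E] [NormedAddCommGroup F]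

lemma exists_norm_secondDiff_le_of_isBigO {u : E → F} {N : ℕ}
    (hu : u =O[nhds 0] fun x => ‖x‖ ^ N) :
    ∃ B ≥ (0 : ℝ), ∃ ρ > (0 : ℝ), ∀ r < ρ, ∀ x h : E, ‖x‖ + ‖h‖ ≤ r →
      ‖secondDiff u x h‖ ≤ B * r ^ N := by
  obtain ⟨c, hc, hcO⟩ := hu.exists_nonneg
  obtain ⟨ρ, hρ, hbound⟩ := Metric.eventually_nhds_iff.1 hcO.bound
  refine ⟨4 * c, by positivity, ρ, hρ, fun r hr x h hxh => ?_⟩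
  have hu_le (y : E) (hy : ‖y‖ ≤ r) : ‖u y‖ ≤ c * r ^ N := by
    have huy : ‖u y‖ ≤ c * ‖‖y‖ ^ N‖ := hbound (by rw [dist_zero_right]; linarith)
    rw [norm_pow, norm_norm] at huy
    exact huy.trans (by gcongr)
  linarith [norm_secondDiff_le u x h, hu_le x (by linarith [norm_nonneg h]),
    hu_le (x + h) ((norm_add_le x h).trans hxh), hu_le (x - h) ((norm_sub_le x h).trans hxh)]

variable [NormedSpace ℝ E] [NormedSpace ℝ F] {u : E → F} {α C : ℝ≥0} {x h : E}

lemma hasFDerivAt_comp_const_add_add_comp_const_sub {v : E} (hadd : DifferentiableAt ℝ u (x + v))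
    (hsub : DifferentiableAt ℝ u (x - v)) :
    HasFDerivAt (fun w => u (x + w) + u (x - w))
      (fderiv ℝ u (x + v) - fderiv ℝ u (x - v)) v := by
  simpa [sub_eq_add_neg, Function.comp_def, Pi.add_def] using
    (hadd.hasFDerivAt.comp v ((hasFDerivAt_id v).const_add x)).add
      (hsub.hasFDerivAt.comp v ((hasFDerivAt_id v).const_sub x))

lemma norm_secondDiff_le_of_holderOnWith_fderiv {s : Set E} (hs : IsOpen s)
    (hu : DifferentiableOn ℝ u s) (hHol : HolderOnWith C α (fderiv ℝ u) s)
    (hball : closedBall x ‖h‖ ⊆ s) :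
    ‖secondDiff u x h‖ ≤ C * 2 ^ (α : ℝ) * ‖h‖ ^ (1 + (α : ℝ)) := by
  have hadd {v : E} (hv : v ∈ closedBall 0 ‖h‖) : x + v ∈ s :=
    hball (by simpa using hv)
  have hsub {v : E} (hv : v ∈ closedBall 0 ‖h‖) : x - v ∈ s :=
    hball (by simpa [dist_eq_norm] using hv)
  have hderiv_le (v : E) (hv : v ∈ closedBall 0 ‖h‖) :
      ‖fderiv ℝ u (x + v) - fderiv ℝ u (x - v)‖ ≤ C * (2 * ‖h‖) ^ (α : ℝ) := by
    rw [← dist_eq_norm]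
    refine hHol.dist_le_of_le (hadd hv) (hsub hv) ?_
    rw [dist_eq_norm, show x + v - (x - v) = (2 : ℝ) • v by module, norm_smul]
    simpa using hv
  have hmean := Convex.norm_image_sub_le_of_norm_hasFDerivWithin_le
    (f := fun v => u (x + v) + u (x - v)) (x := 0) (y := h)
    (fun v hv => (hasFDerivAt_comp_const_add_add_comp_const_sub
      (hu.differentiableAt (hs.mem_nhds (hadd hv)))
      (hu.differentiableAt (hs.mem_nhds (hsub hv)))).hasFDerivWithinAt)
    hderiv_le (convex_closedBall 0 ‖h‖) (by simp) (by simp)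
  calc ‖secondDiff u x h‖ ≤ C * (2 * ‖h‖) ^ (α : ℝ) * ‖h‖ := by
        simpa [secondDiff, two_nsmul] using hmean
    _ = C * 2 ^ (α : ℝ) * ‖h‖ ^ (1 + (α : ℝ)) := by
        rw [Real.mul_rpow zero_le_two (norm_nonneg h),
          Real.rpow_add_of_nonneg (norm_nonneg h) zero_le_one α.coe_nonneg, Real.rpow_one]
        ring

lemma exists_norm_secondDiff_rpow_le {q σ R : ℝ} (hq : 0 < q) (hσ : σ < (1 + (α : ℝ)) * q)
    (hR : 0 < R) (hu : DifferentiableOn ℝ u (ball 0 R))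
    (hHol : HolderOnWith C α (fderiv ℝ u) (ball 0 R))
    (hvan : ∀ N : ℕ, u =O[nhds 0] fun x => ‖x‖ ^ N) (n : ℕ) :
    ∃ β > σ, ∃ M ≥ (0 : ℝ), ∃ ρ > (0 : ℝ), ∀ r ∈ Ioo 0 ρ, ∀ x h : E, ‖x‖ + ‖h‖ ≤ r →
      ‖secondDiff u x h‖ ^ q ≤ M * r ^ n * ‖h‖ ^ β := by
  have hα : 0 < 1 + (α : ℝ) := by positivity
  obtain ⟨a, haσ, haq⟩ : ∃ a, max 0 (σ / (1 + α)) < a ∧ a < q :=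
    exists_between (max_lt hq ((div_lt_iff₀' hα).2 hσ))
  obtain ⟨ha, haσ⟩ := max_lt_iff.1 haσ
  obtain ⟨b, hb, rfl⟩ : ∃ b > 0, q = a + b := ⟨q - a, sub_pos.2 haq, by ring⟩
  obtain ⟨N, hN⟩ := exists_nat_ge (n / b)
  obtain ⟨B, hB, ρ, hρ, hbound⟩ := exists_norm_secondDiff_le_of_isBigO (hvan N)
  refine ⟨(1 + α) * a, (div_lt_iff₀' hα).1 haσ, (C * 2 ^ (α : ℝ)) ^ a * B ^ b, by positivity,
    min 1 (min R ρ), by positivity, ?_⟩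
  rintro r ⟨hr, hrlt⟩ x h hxh
  obtain ⟨hr1, hrR, hrρ⟩ : r < 1 ∧ r < R ∧ r < ρ := by simpa using hrlt
  have hball : closedBall x ‖h‖ ⊆ ball 0 R :=
    closedBall_subset_ball' (by rw [dist_zero_right]; linarith)
  have hr_pow : (r ^ N) ^ b ≤ r ^ n := by
    rw [← Real.rpow_natCast_mul hr.le, ← Real.rpow_natCast r n]
    exact Real.rpow_le_rpow_of_exponent_ge hr hr1.le ((div_le_iff₀ hb).1 hN)
  calc ‖secondDiff u x h‖ ^ (a + b)
      ≤ (C * 2 ^ (α : ℝ) * ‖h‖ ^ (1 + (α : ℝ))) ^ a * (B * r ^ N) ^ b :=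
        rpow_add_le_rpow_mul_rpow (norm_nonneg _)
          (norm_secondDiff_le_of_holderOnWith_fderiv isOpen_ball hu hHol hball)
          (hbound r hrρ x h hxh) ha.le hb.le
    _ = (C * 2 ^ (α : ℝ)) ^ a * B ^ b * (r ^ N) ^ b * ‖h‖ ^ ((1 + (α : ℝ)) * a) := by
        rw [Real.mul_rpow (by positivity) (by positivity), Real.mul_rpow hB (by positivity),
          ← Real.rpow_mul (norm_nonneg h)]
        ring
    _ ≤ (C * 2 ^ (α : ℝ)) ^ a * B ^ b * r ^ n * ‖h‖ ^ ((1 + (α : ℝ)) * a) := by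
        gcongr

end SecondDifference

section Integral

variable {E : Type*} [NormedAddCommGroup E] [NormedSpace ℝ E] [FiniteDimensional ℝ E]
  [Nontrivial E] [MeasurableSpace E] [BorelSpace E] (μ : Measure E) [μ.IsAddHaarMeasure]

lemma exists_abs_setIntegral_div_norm_rpow_le {σ β : ℝ} (hβ : σ < β) :
    ∃ K > (0 : ℝ), ∀ r ≤ 1, ∀ M ≥ (0 : ℝ), ∀ f : E → ℝ,
      (∀ h ∈ ball 0 r, |f h| ≤ M * ‖h‖ ^ β) →
      |∫ h in ball 0 r, f h / ‖h‖ ^ (Module.finrank ℝ E + σ) ∂μ| ≤ K * M := by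
  set e : ℝ := Module.finrank ℝ E + σ
  have hint : IntegrableOn (fun h : E => ‖h‖ ^ (β - e)) (ball 0 1) μ :=
    integrableOn_ball_of_norm_le_rpow (C := 1) (α := e - β) Module.finrank_pos
      (by simp only [e]; linarith)
      (ae_of_all _ fun h => by simp [Real.abs_rpow_of_nonneg])
      (measurable_norm.pow_const _).aestronglyMeasurable
  refine ⟨(∫ h in ball (0 : E) 1, ‖h‖ ^ (β - e) ∂μ) + 1, by positivity, fun r hr M hM f hf => ?_⟩
  have hsub : ball (0 : E) r ⊆ ball 0 1 := ball_subset_ball hr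
  have hf_div : ∀ᵐ h ∂μ.restrict (ball 0 r), ‖f h / ‖h‖ ^ e‖ ≤ M * ‖h‖ ^ (β - e) := by
    filter_upwards [ae_restrict_mem measurableSet_ball, ae_restrict_of_ae (μ.ae_ne 0)]
      with h hh hne
    have hpos : 0 < ‖h‖ := norm_pos_iff.2 hne
    rw [norm_div, Real.norm_eq_abs, Real.norm_of_nonneg (by positivity), Real.rpow_sub hpos,
      ← mul_div_assoc]
    gcongr
    exact hf h hh
  calc |∫ h in ball 0 r, f h / ‖h‖ ^ e ∂μ|
      ≤ ∫ h in ball 0 r, M * ‖h‖ ^ (β - e) ∂μ :=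
        norm_integral_le_of_norm_le ((hint.mono_set hsub).const_mul M) hf_div
    _ = (∫ h in ball 0 r, ‖h‖ ^ (β - e) ∂μ) * M := by rw [integral_const_mul, mul_comm]
    _ ≤ (∫ h in ball 0 1, ‖h‖ ^ (β - e) ∂μ) * M := by
        refine mul_le_mul_of_nonneg_right (setIntegral_mono_set hint ?_ hsub.eventuallyLE) hM
        exact ae_of_all _ fun h => Real.rpow_nonneg (norm_nonneg h) _
    _ ≤ ((∫ h in ball 0 1, ‖h‖ ^ (β - e) ∂μ) + 1) * M := by
        gcongr
        linarith

/-- Here `σ` stands for `s p`, and `l` for `k + 1`. -/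
theorem claimA_C1alpha_p_le_two_general {p σ R k l : ℝ} {α L : ℝ≥0} {u : E → ℝ}
    (hp : 1 < p) (hp2 : p ≤ 2) (hα : σ / (p - 1) < 1 + (α : ℝ)) (hR : 0 < R)
    (hdiff : DifferentiableOn ℝ u (ball 0 R)) (hHol : HolderOnWith L α (fderiv ℝ u) (ball 0 R))
    (hvan : ∀ n : ℕ, u =O[nhds 0] fun x => ‖x‖ ^ n) (hk : 0 ≤ k) (hl : 0 < l) (n : ℕ) :
    ∃ C > (0 : ℝ), ∃ ε₁ > (0 : ℝ), ∀ ε ∈ Ioo (0 : ℝ) ε₁, ∀ x ∈ ball (0 : E) (k * ε),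
      |(1 / 2) * ∫ h in ball (0 : E) (l * ε),
          (Jp p (u x - u (x + h)) + Jp p (u x - u (x - h))) /
            ‖h‖ ^ (Module.finrank ℝ E + σ) ∂μ| ≤ C * ε ^ n := by
  have hp1 : 0 < p - 1 := sub_pos.2 hp
  obtain ⟨β, hβ, M, hM, ρ, hρ, hbound⟩ :=
    exists_norm_secondDiff_rpow_le hp1 ((div_lt_iff₀ hp1).1 hα) hR hdiff hHol hvan n
  obtain ⟨K, hK, hint⟩ := exists_abs_setIntegral_div_norm_rpow_le μ hβ
  have hkl : 0 < k + l := by positivity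
  refine ⟨K * (M * (k + l) ^ n) + 1, by positivity, min ρ 1 / (k + l), by positivity, ?_⟩
  rintro ε ⟨hε, hε₁⟩ x hx
  obtain ⟨hερ, hε1⟩ : ε * (k + l) < ρ ∧ ε * (k + l) < 1 := lt_min_iff.1 ((lt_div_iff₀ hkl).1 hε₁)
  have hJp (h : E) (hh : h ∈ ball 0 (l * ε)) :
      |Jp p (u x - u (x + h)) + Jp p (u x - u (x - h))| ≤
        2 * (M * (ε * (k + l)) ^ n) * ‖h‖ ^ β := by
    rw [mem_ball_zero_iff] at hx hh
    have := hbound (ε * (k + l)) ⟨by positivity, hερ⟩ x h (by linarith)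
    linarith [abs_Jp_add_Jp_le_secondDiff hp hp2 u x h]
  have hW := hint (l * ε) (by nlinarith) _ (by positivity) _ hJp
  calc _ ≤ (1 / 2) * (K * (2 * (M * (ε * (k + l)) ^ n))) := by
        rw [abs_mul, abs_of_pos one_half_pos]
        gcongr
    _ = K * (M * (k + l) ^ n) * ε ^ n := by
        rw [mul_pow]
        ring
    _ ≤ (K * (M * (k + l) ^ n) + 1) * ε ^ n := by
        gcongr
        linarith

end Integral

/-- Claim A, case `1 < p ≤ 2`, `u ∈ C^{1,α}` with `1 + α > sp/(p-1)`.
If `u` is `C^{1,α}` on `B_{R₀}(0)` and vanishes to infinite order at `0`, then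
`W₁(x,ε) = (1/2)∫_{B_{(k+1)ε}(0)} [J_p(u(x)-u(x+h)) + J_p(u(x)-u(x-h))] |h|^{-d-sp} dh`
converges to zero of arbitrary order, uniformly for `x ∈ B_{kε}(0)`. -/
theorem claimA_C1alpha_p_le_two
    (d : ℕ) (hd : 1 ≤ d) (s p : ℝ) (hs : s ∈ Ioo (0 : ℝ) 1) (hp : 1 < p) (hp2 : p ≤ 2)
    (R₀ : ℝ) (hR₀ : R₀ ∈ Ioo (0 : ℝ) 1) (k : ℕ)
    (u : Ed d → ℝ)
    (α : ℝ≥0) (hα_pos : 0 < α) (hα_le : (α : ℝ) ≤ 1) (hα : s * p / (p - 1) < 1 + (α : ℝ))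
    (hdiff : DifferentiableOn ℝ u (ball (0 : Ed d) R₀))
    (hHol : ∃ C : ℝ≥0, HolderOnWith C α (fderiv ℝ u) (ball (0 : Ed d) R₀))
    (hvan : ∀ n : ℕ, u =O[nhds (0 : Ed d)] fun x => ‖x‖ ^ n) :
    ∀ n : ℕ, ∃ C > (0 : ℝ), ∃ ε₁ > (0 : ℝ), ∀ ε ∈ Ioo (0 : ℝ) ε₁,
      ∀ x ∈ ball (0 : Ed d) (k * ε),
        |(1 / 2) * ∫ h in ball (0 : Ed d) ((k + 1) * ε),
            (Jp p (u x - u (x + h)) + Jp p (u x - u (x - h))) / ‖h‖ ^ ((d : ℝ) + s * p)|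
          ≤ C * ε ^ n := by
  obtain ⟨_, hHol⟩ := hHol
  have : Nonempty (Fin d) := Fin.pos_iff_nonempty.1 hd
  simpa only [finrank_euclideanSpace_fin] using claimA_C1alpha_p_le_two_general volume hp hp2 hα
    hR₀.1 hdiff hHol hvan k.cast_nonneg (Nat.cast_add_one_pos k)
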